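/- arXiv:2301.01376 — 2 statements merged into one kernel-verified Lean document; each statement's English description precedes it below -/
import Mathlib

section
/- Let c and m be positive integers with c > 1. If m divides c - 1 and cosocle(m) > rad(c), then for each positive integer k, the triple (1, c^k - 1, c^k) is an abc triple. -/
open scoped Classical

/-- The radical of a natural number: the product of its distinct prime factors. -/
def rad (n : ℕ) : ℕ := ∏ p ∈ n.primeFactors, p

/-- The cosocle of a natural number: `n / rad n`. -/
def cosocle (n : ℕ) : ℕ := n / rad n

/-- `(a, b, c)` is an abc triple: `a, b, c` are relatively prime positive integers with
`a + b = c` and `rad (a*b*c) < c`. -/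
def IsABCTriple (a b c : ℕ) : Prop :=
  0 < a ∧ 0 < b ∧ 0 < c ∧ a + b = c ∧
    Nat.Coprime a b ∧ Nat.Coprime a c ∧ Nat.Coprime b c ∧ rad (a * b * c) < c

/-! Since `n = rad n * cosocle n`, a coprime sum `a + b = c` with `rad (a * c) ≤ cosocle b`
satisfies `rad (a * b * c) ≤ rad b * rad (a * c) ≤ b < c`. Apply this to `1 + (c ^ k - 1) = c ^ k`:
`rad (c ^ k) = rad c`, and `cosocle m ∣ cosocle (c ^ k - 1)` because `m ∣ c - 1 ∣ c ^ k - 1`. -/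

open UniqueFactorizationMonoid

lemma rad_eq_radical (n : ℕ) : rad n = radical n :=
  Nat.radical_eq_prod_primeFactors.symm

lemma rad_pos (n : ℕ) : 0 < rad n :=
  rad_eq_radical n ▸ Nat.radical_pos n

lemma rad_dvd_self (n : ℕ) : rad n ∣ n :=
  rad_eq_radical n ▸ radical_dvd_self

lemma rad_pow (n : ℕ) {k : ℕ} (hk : k ≠ 0) : rad (n ^ k) = rad n := by
  simp only [rad_eq_radical, radical_pow n hk]

lemma rad_mul_dvd (m n : ℕ) : rad (m * n) ∣ rad m * rad n := by
  simp only [rad_eq_radical, radical_mul_dvd]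

lemma rad_mul_le (m n : ℕ) : rad (m * n) ≤ rad m * rad n :=
  Nat.le_of_dvd (Nat.mul_pos (rad_pos m) (rad_pos n)) (rad_mul_dvd m n)

lemma rad_mul_cosocle (n : ℕ) : rad n * cosocle n = n :=
  Nat.mul_div_cancel' (rad_dvd_self n)

lemma cosocle_pos {n : ℕ} (hn : n ≠ 0) : 0 < cosocle n :=
  Nat.pos_of_ne_zero (right_ne_zero_of_mul (rad_mul_cosocle n ▸ hn))

lemma cosocle_dvd_cosocle {m n : ℕ} (h : m ∣ n) : cosocle m ∣ cosocle n := by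
  obtain ⟨q, rfl⟩ := h
  have hrad : rad (m * q) ∣ rad m * q :=
    (rad_mul_dvd m q).trans (mul_dvd_mul_left _ (rad_dvd_self q))
  apply Nat.dvd_of_mul_dvd_mul_left (rad_pos (m * q))
  calc rad (m * q) * cosocle m ∣ rad m * q * cosocle m := mul_dvd_mul_right hrad _
    _ = rad (m * q) * cosocle (m * q) := by
      rw [mul_right_comm, rad_mul_cosocle, rad_mul_cosocle]

lemma rad_mul_mul_le_of_rad_mul_le_cosocle {a b c : ℕ} (h : rad (a * c) ≤ cosocle b) :
    rad (a * b * c) ≤ b :=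
  calc rad (a * b * c) = rad (b * (a * c)) := by rw [mul_comm a b, mul_assoc]
    _ ≤ rad b * rad (a * c) := rad_mul_le _ _
    _ ≤ rad b * cosocle b := Nat.mul_le_mul_left _ h
    _ = b := rad_mul_cosocle b

lemma isABCTriple_of_rad_mul_le_cosocle {a b c : ℕ} (ha : 0 < a) (hb : 0 < b) (hadd : a + b = c)
    (hab : Nat.Coprime a b) (h : rad (a * c) ≤ cosocle b) : IsABCTriple a b c := by
  have hlt : rad (a * b * c) < c :=
    (rad_mul_mul_le_of_rad_mul_le_cosocle h).trans_lt (by omega)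
  subst hadd
  exact ⟨ha, hb, Nat.add_pos_left ha b, rfl, hab, Nat.coprime_self_add_right.mpr hab,
    Nat.coprime_add_self_right.mpr hab.symm, hlt⟩

theorem stmt_0 (c m : ℕ) (hc : 1 < c) (hm : 0 < m) (hdvd : m ∣ c - 1)
    (hcos : rad c < cosocle m) :
    ∀ k : ℕ, 0 < k → IsABCTriple 1 (c ^ k - 1) (c ^ k) := by
  intro k hk
  have hck : 1 < c ^ k := Nat.one_lt_pow hk.ne' hc
  have hpos : 0 < c ^ k - 1 := Nat.sub_pos_of_lt hck
  have hdvd_pow : m ∣ c ^ k - 1 :=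
    calc m ∣ c - 1 := hdvd
      _ ∣ c ^ k - 1 := by simpa only [one_pow] using Nat.sub_dvd_pow_sub_pow c 1 k
  have hrad : rad (1 * c ^ k) ≤ cosocle (c ^ k - 1) :=
    calc rad (1 * c ^ k) = rad c := by rw [one_mul, rad_pow c hk.ne']
      _ ≤ cosocle m := hcos.le
      _ ≤ cosocle (c ^ k - 1) :=
        Nat.le_of_dvd (cosocle_pos hpos.ne') (cosocle_dvd_cosocle hdvd_pow)
  exact isABCTriple_of_rad_mul_le_cosocle one_pos hpos (Nat.add_sub_cancel' hck.le)
    (Nat.coprime_one_left _) hrad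
end

section
/- Let x, y ≥ 2 be integers and let p be a prime dividing x. Then for each integer j with 2 ≤ j ≤ y, one has v_p(x*y) ≤ v_p( binom(y, j) * x^j ), where binom(y, j) is the binomial coefficient. Moreover, equality holds if and only if p = 2, j = 2, x ≡ 2 (mod 4), and y is even. -/
/-!
Write `v` for the `p`-adic valuation. Absorption, `y * (y - 1).choose (j - 1) = y.choose j * j`,
turns the difference of the two valuations into
`v (y.choose j * x ^ j) - v (x * y) = v ((y - 1).choose (j - 1)) + ((j - 1) * v x - v j)`.
Since `1 ≤ v x` and `v j ≤ j - 1`, both summands are nonnegative. For `2 ≤ j` the bound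
`v j ≤ j - 1` is sharp only at `p = j = 2`, so the difference vanishes exactly when in addition
`v x = 1` and `v (y - 1) = 0`.
-/

section Valuation

variable {p : ℕ} [Fact p.Prime]

theorem padicValNat_add_one_eq_self_iff {n : ℕ} (hn : 2 ≤ n) :
    padicValNat p n + 1 = n ↔ p = 2 ∧ n = 2 := by
  constructor
  · intro h
    have hp : 2 ≤ p := (Fact.out : p.Prime).two_le
    rcases lt_trichotomy p n with hlt | rfl | hgt
    · have : padicValNat p n + p ≤ n := padicValNat_add_le_self hlt
      omega
    · have : padicValNat p p = 1 := padicValNat_self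
      omega
    · have : padicValNat p n = 0 :=
        padicValNat.eq_zero_of_not_dvd (Nat.not_dvd_of_pos_of_lt (by omega) hgt)
      omega
  · rintro ⟨rfl, rfl⟩
    rw [padicValNat_self]

theorem padicValNat_choose_add_one_add {n k : ℕ} (hk : k ≤ n) :
    padicValNat p ((n + 1).choose (k + 1)) + padicValNat p (k + 1) =
      padicValNat p (n + 1) + padicValNat p (n.choose k) := by
  rw [← padicValNat.mul (Nat.choose_ne_zero (by omega)) k.succ_ne_zero,
    ← padicValNat.mul n.succ_ne_zero (Nat.choose_ne_zero hk), Nat.add_one_mul_choose_eq]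

theorem padicValNat_choose_mul_pow_add {n k x : ℕ} (hk : k ≤ n) (hx : x ≠ 0) :
    padicValNat p ((n + 1).choose (k + 1) * x ^ (k + 1)) + padicValNat p (k + 1) =
      padicValNat p (x * (n + 1)) + padicValNat p (n.choose k) + k * padicValNat p x := by
  rw [padicValNat.mul (Nat.choose_ne_zero (by omega)) (pow_ne_zero _ hx), padicValNat.pow,
    padicValNat.mul hx n.succ_ne_zero]
  linear_combination padicValNat_choose_add_one_add (p := p) hk

end Valuation

theorem padicValNat_two_eq_zero_iff_odd {n : ℕ} (hn : n ≠ 0) : padicValNat 2 n = 0 ↔ Odd n := by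
  simp [padicValNat.eq_zero_iff, hn, ← even_iff_two_dvd]

theorem padicValNat_two_eq_one_iff {n : ℕ} : padicValNat 2 n = 1 ↔ n % 4 = 2 := by
  rcases eq_or_ne n 0 with rfl | hn
  · simp
  · have h2 : 2 ^ 1 ∣ n ↔ 1 ≤ padicValNat 2 n := padicValNat_dvd_iff_le hn
    have h4 : 2 ^ 2 ∣ n ↔ 2 ≤ padicValNat 2 n := padicValNat_dvd_iff_le hn
    omega

theorem stmt_6 (x y : ℕ) (hx : 2 ≤ x) (hy : 2 ≤ y) (p : ℕ) (hp : p.Prime) (hpx : p ∣ x)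
    (j : ℕ) (hj2 : 2 ≤ j) (hjy : j ≤ y) :
    padicValNat p (x * y) ≤ padicValNat p (y.choose j * x ^ j) ∧
    (padicValNat p (x * y) = padicValNat p (y.choose j * x ^ j) ↔
      p = 2 ∧ j = 2 ∧ x % 4 = 2 ∧ Even y) := by
  have : Fact p.Prime := ⟨hp⟩
  obtain ⟨k, rfl⟩ := Nat.exists_eq_add_of_le' (one_le_two.trans hj2)
  obtain ⟨n, rfl⟩ := Nat.exists_eq_add_of_le' (one_le_two.trans hy)
  have hsum := padicValNat_choose_mul_pow_add (p := p) (n := n) (k := k) (x := x)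
    (by omega) (by omega)
  have hvj : padicValNat p (k + 1) < k + 1 := Nat.padicValNat_lt_self k.succ_ne_zero
  have hvx : k ≤ k * padicValNat p x :=
    Nat.le_mul_of_pos_right k (one_le_padicValNat_of_dvd (by omega) hpx)
  refine ⟨by omega, ?_⟩
  calc padicValNat p (x * (n + 1)) = padicValNat p ((n + 1).choose (k + 1) * x ^ (k + 1))
    _ ↔ padicValNat p (k + 1) + 1 = k + 1 ∧ k * padicValNat p x = k ∧
          padicValNat p (n.choose k) = 0 := by omega
    _ ↔ (p = 2 ∧ k + 1 = 2) ∧ padicValNat p x = 1 ∧ padicValNat p (n.choose k) = 0 := by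
      rw [padicValNat_add_one_eq_self_iff hj2, Nat.mul_eq_left (by omega)]
    _ ↔ p = 2 ∧ k + 1 = 2 ∧ x % 4 = 2 ∧ Even (n + 1) := by
      rw [and_assoc]
      refine and_congr_right fun hp2 => and_congr_right fun hk => ?_
      obtain rfl : k = 1 := by omega
      rw [hp2, Nat.choose_one_right, padicValNat_two_eq_one_iff,
        padicValNat_two_eq_zero_iff_odd (by omega), Nat.even_add_one, Nat.not_even_iff_odd]
end
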